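/- arXiv:1903.06981 — 2 statements merged into one kernel-verified Lean document; each statement's English description precedes it below -/
import Mathlib

section
/- On the tree T_k consisting of a path p_k,...,p_1,c,p'_1,...,p'_k of 2k+1 vertices with k extra leaves attached to the center c, where the leaf tokens and center token are initially home and path token at p_i must go to p'_i and vice versa: there is a swap sequence of length at most (3/2)k² + 9k, while any swap sequence that never moves tokens on happy leaves requires at least 2k² + k swaps. -/
/-- Apply a list of swaps to a token placement `π` (`π v` = token on vertex `v`). -/
def applySwaps {V : Type*} [DecidableEq V] (π : Equiv.Perm V) (s : List (V × V)) :
    Equiv.Perm V :=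
  s.foldl (fun σ e => σ * Equiv.swap e.1 e.2) π

/-- Vertices of the tree `T_k`: `Sum.inl (0, i)` is the path vertex `p_{i+1}`,
`Sum.inl (1, i)` is `p'_{i+1}`, `Sum.inl (2, i)` is the `i`-th extra leaf,
and `Sum.inr ()` is the center `c`. -/
abbrev V8 (k : ℕ) := (Fin 3 × Fin k) ⊕ Unit

/-- Oriented edges of `T_k`: center–`p_1`, center–`p'_1`, center–leaves, and
consecutive vertices along each of the two arms. -/
def base8 (k : ℕ) : V8 k → V8 k → Prop := fun u v =>
  match u, v with
  | Sum.inr _, Sum.inl (j, i) => ((i : ℕ) = 0 ∧ ((j : ℕ) = 0 ∨ (j : ℕ) = 1)) ∨ (j : ℕ) = 2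
  | Sum.inl (j, i), Sum.inl (j', i') =>
      j = j' ∧ ((j : ℕ) = 0 ∨ (j : ℕ) = 1) ∧ (i : ℕ) + 1 = (i' : ℕ)
  | _, _ => False

/-- Adjacency in `T_k` (symmetrization of `base8`). -/
def adj8 (k : ℕ) : V8 k → V8 k → Prop := fun u v => base8 k u v ∨ base8 k v u

/-- Leaves of the tree `T_k`: the `k` extra leaves and the two arm endpoints. -/
def isLeaf8 (k : ℕ) : V8 k → Prop := fun v =>
  match v with
  | Sum.inl (j, i) => (j : ℕ) = 2 ∨ (i : ℕ) + 1 = k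
  | Sum.inr _ => False

/-- Initial token placement on `T_k`: the token on `p_i` must go to `p'_i` and vice
versa (tokens are labelled by their destination vertices), while the tokens on the
center and on the extra leaves are already home. -/
def π8 (k : ℕ) : Equiv.Perm (V8 k) :=
  Equiv.sumCongr (Equiv.prodCongr (Equiv.swap 0 1) (Equiv.refl (Fin k))) (Equiv.refl Unit)

namespace Tok

/-- `τ` can be reached from `σ` with at most `n / 2` legal swaps. -/
def Reach (k n : ℕ) (σ τ : Equiv.Perm (V8 k)) : Prop :=
  ∃ s : List (V8 k × V8 k), (∀ e ∈ s, adj8 k e.1 e.2) ∧ applySwaps σ s = τ ∧ 2 * s.length ≤ n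

lemma applySwaps_append {V : Type*} [DecidableEq V] (σ : Equiv.Perm V) (s t : List (V × V)) :
    applySwaps σ (s ++ t) = applySwaps (applySwaps σ s) t := by
  simp [applySwaps]

lemma Reach.refl {k : ℕ} (σ : Equiv.Perm (V8 k)) : Reach k 0 σ σ :=
  ⟨[], by simp, rfl, by simp⟩

lemma Reach.trans {k m n : ℕ} {σ τ ρ : Equiv.Perm (V8 k)} (h : Reach k m σ τ)
    (h' : Reach k n τ ρ) : Reach k (m + n) σ ρ := by
  obtain ⟨s, hs, rfl, hl⟩ := h
  obtain ⟨t, ht, rfl, hl'⟩ := h'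
  refine ⟨s ++ t, ?_, applySwaps_append _ _ _, ?_⟩
  · intro e he
    rcases List.mem_append.1 he with h | h
    · exact hs e h
    · exact ht e h
  · rw [List.length_append]; omega

lemma Reach.mono {k m n : ℕ} {σ τ : Equiv.Perm (V8 k)} (h : Reach k m σ τ) (hmn : m ≤ n) :
    Reach k n σ τ := by
  obtain ⟨s, hs, h1, hl⟩ := h
  exact ⟨s, hs, h1, hl.trans hmn⟩

lemma Reach.step {k : ℕ} (σ : Equiv.Perm (V8 k)) (u v : V8 k) (h : adj8 k u v) :
    Reach k 2 σ (σ * Equiv.swap u v) :=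
  ⟨[(u, v)], by simpa using h, rfl, by simp⟩

/-- center -/
abbrev ctr (k : ℕ) : V8 k := Sum.inr ()

lemma adj_leaf {k : ℕ} (i : Fin k) : adj8 k (ctr k) (Sum.inl (2, i)) := by
  left; right; rfl

/-- Bring a token which sits on the star to the center. -/
lemma bring {k : ℕ} (σ : Equiv.Perm (V8 k)) (x : V8 k)
    (hx : ∀ (b : Fin 3) (i : Fin k), b ≠ 2 → σ (Sum.inl (b, i)) ≠ x) :
    ∃ τ, Reach k 2 σ τ ∧ τ (ctr k) = x ∧ ∀ v, v ≠ ctr k → σ v ≠ x → τ v = σ v := by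
  obtain ⟨v, rfl⟩ := σ.surjective x
  rcases v with ⟨b, i⟩ | ⟨⟩
  · have hb : b = 2 := by
      by_contra h
      exact hx b i h rfl
    subst hb
    refine ⟨_, Reach.step σ _ _ (adj_leaf i), by simp, ?_⟩
    intro v hv hv'
    rw [Equiv.Perm.mul_apply, Equiv.swap_apply_of_ne_of_ne hv]
    rintro rfl
    exact hv' rfl
  · exact ⟨σ, (Reach.refl σ).mono (by omega), rfl, fun _ _ _ => rfl⟩

lemma rot {k : ℕ} (a : Fin 3) (ha : a ≠ 2) (j : ℕ) (hj : j < k) (σ : Equiv.Perm (V8 k)) :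
    ∃ τ, Reach k (2 * (j + 1)) σ τ ∧ τ (Sum.inl (a, ⟨0, by omega⟩)) = σ (ctr k) ∧
      (∀ i (hi : i < j), τ (Sum.inl (a, ⟨i + 1, by omega⟩)) = σ (Sum.inl (a, ⟨i, by omega⟩))) ∧
      (∀ i (hi : i < k), j < i → τ (Sum.inl (a, ⟨i, hi⟩)) = σ (Sum.inl (a, ⟨i, hi⟩))) ∧
      (∀ b i, b ≠ a → τ (Sum.inl (b, i)) = σ (Sum.inl (b, i))) := by
  have ha' : (a : ℕ) = 0 ∨ (a : ℕ) = 1 := by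
    revert ha; revert a; decide
  induction j generalizing σ with
  | zero =>
    refine ⟨_, Reach.step σ (ctr k) (Sum.inl (a, ⟨0, hj⟩)) (Or.inl (Or.inl ⟨rfl, ha'⟩)), ?_, ?_, ?_, ?_⟩
    · simp
    · intro i hi; omega
    · intro i hi h0
      rw [Equiv.Perm.mul_apply, Equiv.swap_apply_of_ne_of_ne] <;> simp
      omega
    · intro b i hb
      rw [Equiv.Perm.mul_apply, Equiv.swap_apply_of_ne_of_ne] <;> simp [hb]
  | succ j ih =>
    obtain ⟨τ, hR, h0, h1, h2, h3⟩ := ih (by omega)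
      (σ * Equiv.swap (Sum.inl (a, ⟨j, by omega⟩)) (Sum.inl (a, ⟨j + 1, hj⟩)))
    refine ⟨τ, ((Reach.step σ (Sum.inl (a, ⟨j, by omega⟩)) (Sum.inl (a, ⟨j + 1, hj⟩))
      (Or.inl ⟨rfl, ha', rfl⟩)).trans hR).mono (by omega), ?_, ?_, ?_, ?_⟩
    · rw [h0, Equiv.Perm.mul_apply, Equiv.swap_apply_of_ne_of_ne] <;> simp
    · intro i hi
      rcases Nat.lt_succ_iff_lt_or_eq.1 hi with h | rfl
      · rw [h1 i h, Equiv.Perm.mul_apply, Equiv.swap_apply_of_ne_of_ne] <;> simp <;> omega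
      · rw [h2 (i + 1) _ (by omega)]; simp
    · intro i hi hji
      rw [h2 i hi (by omega), Equiv.Perm.mul_apply, Equiv.swap_apply_of_ne_of_ne] <;> simp <;> omega
    · intro b i hb
      rw [h3 b i hb, Equiv.Perm.mul_apply, Equiv.swap_apply_of_ne_of_ne] <;> simp [hb]

lemma phase_aux {k : ℕ} (a : Fin 3) (ha : a ≠ 2) (σ : Equiv.Perm (V8 k)) (f : Fin k → V8 k)
    (hf : Function.Injective f)
    (hσ : ∀ (m : Fin k) (b : Fin 3) (i : Fin k), b ≠ 2 → σ (Sum.inl (b, i)) ≠ f m)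
    (j : ℕ) (hj : j ≤ k) :
    ∃ τ, Reach k (j * (j + 3)) σ τ ∧
      (∀ i (hi : i < j), τ (Sum.inl (a, ⟨i, by omega⟩)) = f ⟨k - j + i, by omega⟩) ∧
      (∀ i (hi : i < k), j ≤ i → τ (Sum.inl (a, ⟨i, hi⟩)) = σ (Sum.inl (a, ⟨i, hi⟩))) ∧
      (∀ b i, b ≠ a → b ≠ 2 → τ (Sum.inl (b, i)) = σ (Sum.inl (b, i))) := by
  induction j with
  | zero =>
    exact ⟨σ, (Reach.refl σ).mono (by omega), fun i hi => absurd hi (by omega),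
      fun _ _ _ => rfl, fun _ _ _ _ => rfl⟩
  | succ j ih =>
    obtain ⟨τ, hR, h1, h2, h3⟩ := ih (by omega)
    have key : ∀ (b : Fin 3) (i : Fin k), b ≠ 2 →
        τ (Sum.inl (b, i)) ≠ f ⟨k - (j + 1), by omega⟩ := by
      intro b i hb
      by_cases hba : b = a
      · subst hba
        obtain ⟨i, hi⟩ := i
        by_cases hij : i < j
        · rw [h1 i hij]
          intro h
          have := hf h
          simp at this
          omega
        · rw [h2 i hi (by omega)]
          exact hσ _ _ _ hb
      · rw [h3 b i hba hb]
        exact hσ _ _ _ hb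
    obtain ⟨τ₁, hR₁, hc, hk⟩ := bring τ _ key
    obtain ⟨τ₂, hR₂, g0, g1, g2, g3⟩ := rot a ha j (by omega) τ₁
    have hk' : ∀ (b : Fin 3) (i : Fin k), b ≠ 2 → τ₁ (Sum.inl (b, i)) = τ (Sum.inl (b, i)) :=
      fun b i hb => hk _ (by simp) (key b i hb)
    refine ⟨τ₂, ((hR.trans hR₁).trans hR₂).mono (by ring_nf; omega), ?_, ?_, ?_⟩
    · intro i hi
      rcases i with _ | i
      · rw [g0, hc]; rfl
      · rw [g1 i (by omega), hk' _ _ ha, h1 i (by omega)]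
        congr 2; omega
    · intro i hi hji
      rw [g2 i hi (by omega), hk' _ _ ha, h2 i hi (by omega)]
    · intro b i hb hb2
      rw [g3 b i hb, hk' _ _ hb2, h3 b i hb hb2]

lemma phase {k : ℕ} (a : Fin 3) (ha : a ≠ 2) (σ : Equiv.Perm (V8 k)) (f : Fin k → V8 k)
    (hf : Function.Injective f)
    (hσ : ∀ (m : Fin k) (b : Fin 3) (i : Fin k), b ≠ 2 → σ (Sum.inl (b, i)) ≠ f m) :
    ∃ τ, Reach k (k * (k + 3)) σ τ ∧ (∀ i, τ (Sum.inl (a, i)) = f i) ∧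
      (∀ b i, b ≠ a → b ≠ 2 → τ (Sum.inl (b, i)) = σ (Sum.inl (b, i))) := by
  obtain ⟨τ, hR, h1, -, h3⟩ := phase_aux a ha σ f hf hσ k le_rfl
  refine ⟨τ, hR, ?_, h3⟩
  rintro ⟨i, hi⟩
  rw [h1 i hi]
  congr 2; omega

lemma fix_aux {k : ℕ} (σ : Equiv.Perm (V8 k))
    (hσ : ∀ (b : Fin 3) (i : Fin k), b ≠ 2 → σ (Sum.inl (b, i)) = Sum.inl (b, i))
    (j : ℕ) (hj : j ≤ k) :
    ∃ τ, Reach k (4 * j) σ τ ∧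
      (∀ (b : Fin 3) (i : Fin k), (b ≠ 2 ∨ (i : ℕ) < j) → τ (Sum.inl (b, i)) = Sum.inl (b, i)) := by
  induction j with
  | zero =>
    exact ⟨σ, Reach.refl σ, fun b i h => hσ b i (by simpa using h)⟩
  | succ j ih =>
    obtain ⟨τ, hR, h⟩ := ih (by omega)
    let x : V8 k := Sum.inl (2, ⟨j, by omega⟩)
    have key : ∀ (b : Fin 3) (i : Fin k), (b ≠ 2 ∨ (i : ℕ) < j) → τ (Sum.inl (b, i)) ≠ x := by
      intro b i hb
      rw [h b i hb]
      intro he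
      simp only [x, Sum.inl.injEq, Prod.mk.injEq, Fin.ext_iff (a := i)] at he
      rcases hb with hb | hb
      · exact hb he.1
      · have := he.2
        omega
    obtain ⟨τ₁, hR₁, hc, hk⟩ := bring τ x (fun b i hb => key b i (Or.inl hb))
    refine ⟨τ₁ * Equiv.swap (ctr k) x,
      ((hR.trans hR₁).trans (Reach.step τ₁ _ _ (adj_leaf _))).mono (by omega), ?_⟩
    intro b i hbi
    by_cases hx : Sum.inl (b, i) = x
    · rw [hx, Equiv.Perm.mul_apply, Equiv.swap_apply_right, hc]
    · have hbi' : b ≠ 2 ∨ (i : ℕ) < j := by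
        by_contra hcon
        push Not at hcon
        obtain ⟨rfl, h2⟩ := hcon
        apply hx
        simp only [x, Sum.inl.injEq, Prod.mk.injEq, true_and, Fin.ext_iff]
        rcases hbi with h | h
        · exact absurd rfl h
        · omega
      rw [Equiv.Perm.mul_apply, Equiv.swap_apply_of_ne_of_ne (by simp) hx,
        hk _ (by simp) (key _ _ hbi'), h _ _ hbi']

lemma fix {k : ℕ} (σ : Equiv.Perm (V8 k))
    (hσ : ∀ (b : Fin 3) (i : Fin k), b ≠ 2 → σ (Sum.inl (b, i)) = Sum.inl (b, i)) :
    Reach k (4 * k) σ 1 := by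
  obtain ⟨τ, hR, h⟩ := fix_aux σ hσ k le_rfl
  have h' : ∀ p, τ (Sum.inl p) = Sum.inl p := fun p => h p.1 p.2 (Or.inr p.2.2)
  suffices τ = 1 by rwa [this] at hR
  ext1 v
  rcases v with p | ⟨⟩
  · exact h' p
  · rcases hv : τ (Sum.inr ()) with p | ⟨⟩
    · have := τ.injective (hv.trans (h' p).symm)
      simp at this
    · rfl

lemma arm_cases (b : Fin 3) (hb : b ≠ 2) : b = 0 ∨ b = 1 := by
  revert hb; revert b; decide

lemma upper (k : ℕ) : Reach k (3 * k ^ 2 + 18 * k) (π8 k) 1 := by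
  have p0 : ∀ i, π8 k (Sum.inl (0, i)) = Sum.inl (1, i) := fun i => by simp [π8]
  have p1 : ∀ i, π8 k (Sum.inl (1, i)) = Sum.inl (0, i) := fun i => by simp [π8]
  have inj : ∀ a : Fin 3, Function.Injective (fun i : Fin k => (Sum.inl (a, i) : V8 k)) := by
    intro a i i' h
    simpa using h
  obtain ⟨τ₁, R₁, h₁, g₁⟩ := phase 0 (by decide) (π8 k) (fun i => Sum.inl (2, i)) (inj 2) (by
    intro m b i hb
    rcases arm_cases b hb with rfl | rfl
    · rw [p0]; simp
    · rw [p1]; simp)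
  have g₁' : ∀ i, τ₁ (Sum.inl (1, i)) = Sum.inl (0, i) := fun i => by
    rw [g₁ 1 i (by decide) (by decide), p1]
  obtain ⟨τ₂, R₂, h₂, g₂⟩ := phase 1 (by decide) τ₁ (fun i => Sum.inl (1, i)) (inj 1) (by
    intro m b i hb
    rcases arm_cases b hb with rfl | rfl
    · rw [h₁]; simp
    · rw [g₁']; simp)
  have g₂' : ∀ i, τ₂ (Sum.inl (0, i)) = Sum.inl (2, i) := fun i => by
    rw [g₂ 0 i (by decide) (by decide), h₁]
  obtain ⟨τ₃, R₃, h₃, g₃⟩ := phase 0 (by decide) τ₂ (fun i => Sum.inl (0, i)) (inj 0) (by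
    intro m b i hb
    rcases arm_cases b hb with rfl | rfl
    · rw [g₂']; simp
    · rw [h₂]; simp)
  have R₄ := fix τ₃ (by
    intro b i hb
    rcases arm_cases b hb with rfl | rfl
    · exact h₃ i
    · rw [g₃ 1 i (by decide) (by decide), h₂])
  exact (((R₁.trans R₂).trans R₃).trans R₄).mono (by ring_nf; omega)

/-- Linear position of the vertices: the path in order, then the leaves. -/
def pos (k : ℕ) : V8 k → ℤ := fun v =>
  match v with
  | Sum.inr _ => 0
  | Sum.inl (j, i) =>
      if j = 0 then -((i : ℤ) + 1) else if j = 1 then (i : ℤ) + 1 else (k : ℤ) + i + 1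

lemma pos_inj (k : ℕ) : Function.Injective (pos k) := by
  rintro (⟨a, i, hi⟩ | ⟨⟩) (⟨b, j, hj⟩ | ⟨⟩) h
  · fin_cases a <;> fin_cases b <;> simp [pos] at h ⊢ <;> omega
  · fin_cases a <;> simp [pos] at h <;> omega
  · fin_cases b <;> simp [pos] at h <;> omega
  · rfl

/-- Inverted token pairs. -/
def D {k : ℕ} (σ : Equiv.Perm (V8 k)) : Finset (V8 k × V8 k) :=
  Finset.univ.filter fun p => pos k p.1 < pos k p.2 ∧ pos k (σ.symm p.2) < pos k (σ.symm p.1)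

lemma swap_order {k : ℕ} (a b u v : V8 k) (hab : pos k b = pos k a + 1)
    (huv : pos k u < pos k v) (h : ¬ (u = a ∧ v = b)) :
    pos k (Equiv.swap a b u) < pos k (Equiv.swap a b v) := by
  have inj : ∀ x y, pos k x = pos k y ↔ x = y := fun x y => (pos_inj k).eq_iff
  have e1 := inj u a
  have e2 := inj u b
  have e3 := inj v a
  have e4 := inj v b
  simp only [Equiv.swap_apply_def]
  split_ifs <;> simp_all <;> omega

lemma D_step {k : ℕ} (σ : Equiv.Perm (V8 k)) (a b : V8 k) (hab : pos k b = pos k a + 1) :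
    (D σ).card ≤ (D (σ * Equiv.swap a b)).card + 1 := by
  refine (Finset.card_le_card ?_).trans (Finset.card_insert_le (σ b, σ a) _)
  rintro ⟨x, y⟩ h
  simp only [D, Finset.mem_filter, Finset.mem_univ, true_and, Finset.mem_insert] at h ⊢
  by_cases hc : σ.symm y = a ∧ σ.symm x = b
  · left
    rw [← hc.1, ← hc.2]; simp
  · right
    exact ⟨h.1, swap_order a b _ _ hab h.2 hc⟩

lemma D_step' {k : ℕ} (σ : Equiv.Perm (V8 k)) (a b : V8 k) (h : adj8 k a b)
    (ha : ∀ i, a ≠ Sum.inl (2, i)) (hb : ∀ i, b ≠ Sum.inl (2, i)) :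
    (D σ).card ≤ (D (σ * Equiv.swap a b)).card + 1 := by
  have key : ∀ u v : V8 k, base8 k u v → (∀ i, u ≠ Sum.inl (2, i)) → (∀ i, v ≠ Sum.inl (2, i)) →
      pos k v = pos k u + 1 ∨ pos k u = pos k v + 1 := by
    rintro (⟨j, i⟩ | ⟨⟩) (⟨j', i'⟩ | ⟨⟩) h hu hv
    · obtain ⟨rfl, h1, h2⟩ := h
      fin_cases j <;> simp [pos] at h1 ⊢ <;> omega
    · exact h.elim
    · fin_cases j' <;> simp [base8, pos] at h hv ⊢ <;> omega
    · exact h.elim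
  have h' : pos k b = pos k a + 1 ∨ pos k a = pos k b + 1 := by
    rcases h with h | h
    · exact key a b h ha hb
    · exact (key b a h hb ha).symm
  rcases h' with h' | h'
  · exact D_step σ a b h'
  · rw [Equiv.swap_comm]
    exact D_step σ b a h'

lemma D_le {k : ℕ} (s : List (V8 k × V8 k)) (σ : Equiv.Perm (V8 k))
    (hs : ∀ e ∈ s, adj8 k e.1 e.2) (hσ : ∀ i, σ (Sum.inl (2, i)) = Sum.inl (2, i))
    (h : ∀ (t : ℕ) (h : t < s.length) (u : V8 k),
        (u = (s.get ⟨t, h⟩).1 ∨ u = (s.get ⟨t, h⟩).2) → isLeaf8 k u →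
        applySwaps σ (s.take t) u ≠ u) :
    (D σ).card ≤ (D (applySwaps σ s)).card + s.length := by
  induction s generalizing σ with
  | nil => simp [applySwaps]
  | cons e s ih =>
    have h0 := h 0 (by simp)
    have ha : ∀ i, e.1 ≠ Sum.inl (2, i) := fun i hi =>
      h0 (Sum.inl (2, i)) (Or.inl hi.symm) (Or.inl rfl) (hσ i)
    have hb : ∀ i, e.2 ≠ Sum.inl (2, i) := fun i hi =>
      h0 (Sum.inl (2, i)) (Or.inr hi.symm) (Or.inl rfl) (hσ i)
    have h1 := D_step' σ e.1 e.2 (hs e (by simp)) ha hb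
    have h2 := ih (σ * Equiv.swap e.1 e.2) (fun e' he' => hs e' (by simp [he']))
      (fun i => by
        rw [Equiv.Perm.mul_apply, Equiv.swap_apply_of_ne_of_ne (ha i).symm (hb i).symm, hσ])
      (fun t ht u hu hl => h (t + 1) (by simpa using ht) u (by simpa using hu) hl)
    have h3 : applySwaps σ (e :: s) = applySwaps (σ * Equiv.swap e.1 e.2) s := rfl
    rw [h3, List.length_cons]
    omega

/-- Path vertex at position `n - k`. -/
def vert (k : ℕ) (n : Fin (2 * k + 1)) : V8 k :=
  if h : (n : ℕ) < k then Sum.inl (0, ⟨k - 1 - n, by omega⟩)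
  else if h' : (n : ℕ) = k then Sum.inr ()
  else Sum.inl (1, ⟨n - k - 1, by omega⟩)

lemma pos_vert (k : ℕ) (n : Fin (2 * k + 1)) : pos k (vert k n) = (n : ℤ) - k := by
  unfold vert
  split_ifs <;> simp [pos] <;> omega

lemma pos_pi_vert (k : ℕ) (n : Fin (2 * k + 1)) :
    pos k ((π8 k).symm (vert k n)) = k - (n : ℤ) := by
  unfold vert
  split_ifs <;> simp [pos, π8] <;> omega

lemma pairs_card (n : ℕ) :
    ((Finset.univ : Finset (Fin n × Fin n)).filter fun p => p.1 < p.2).card * 2 = n * (n - 1) := by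
  have h1 : (Finset.univ.filter fun p : Fin n × Fin n => p.1 < p.2).card =
      ∑ j : Fin n, (j : ℕ) := by
    rw [Finset.card_filter, Fintype.sum_prod_type_right]
    refine Finset.sum_congr rfl fun j _ => ?_
    rw [← Finset.card_filter]
    have : (Finset.univ.filter fun i : Fin n => i < j) = Finset.Iio j := by ext; simp
    rw [this, Fin.card_Iio]
  rw [h1, Fin.sum_univ_eq_sum_range (fun i => i), Finset.sum_range_id_mul_two]

lemma D_pi (k : ℕ) : 2 * k ^ 2 + k ≤ (D (π8 k)).card := by
  have h := pairs_card (2 * k + 1)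
  have h2 : ((Finset.univ : Finset (Fin (2 * k + 1) × Fin (2 * k + 1))).filter
      fun p => p.1 < p.2).card ≤ (D (π8 k)).card := by
    apply Finset.card_le_card_of_injOn (fun p => (vert k p.1, vert k p.2))
    · rintro ⟨m, n⟩ hmn
      simp only [Finset.coe_filter, Finset.mem_univ, true_and, Set.mem_setOf_eq, D, pos_vert,
        pos_pi_vert, Fin.lt_def] at hmn ⊢
      omega
    · rintro ⟨m, n⟩ - ⟨m', n'⟩ - he
      simp only [Prod.mk.injEq] at he
      have e1 := congrArg (pos k) he.1
      have e2 := congrArg (pos k) he.2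
      rw [pos_vert, pos_vert] at e1 e2
      ext <;> simp <;> omega
  simp only [Nat.add_sub_cancel] at h
  nlinarith

lemma D_one (k : ℕ) : (D (1 : Equiv.Perm (V8 k))).card = 0 := by
  rw [Finset.card_eq_zero, D, Finset.filter_eq_empty_iff]
  rintro p - ⟨h1, h2⟩
  exact lt_asymm h1 h2

end Tok

/-- On `T_k` there is a sorting swap sequence of length at most `(3/2)k² + 9k`,
while every sorting swap sequence that never moves a token on a happy leaf
(a leaf whose current token is its destination) has length at least `2k² + k`. -/
theorem stmt8 (k : ℕ) (hk : 1 ≤ k) :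
    (∃ s : List (V8 k × V8 k), (∀ e ∈ s, adj8 k e.1 e.2) ∧
      applySwaps (π8 k) s = 1 ∧ 2 * s.length ≤ 3 * k ^ 2 + 18 * k) ∧
    (∀ s : List (V8 k × V8 k), (∀ e ∈ s, adj8 k e.1 e.2) →
      applySwaps (π8 k) s = 1 →
      (∀ (t : ℕ) (h : t < s.length) (u : V8 k),
        (u = (s.get ⟨t, h⟩).1 ∨ u = (s.get ⟨t, h⟩).2) → isLeaf8 k u →
        applySwaps (π8 k) (s.take t) u ≠ u) →
      2 * k ^ 2 + k ≤ s.length) := by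
  refine ⟨Tok.upper k, ?_⟩
  intro s hs h1 hhappy
  have h := Tok.D_le s (π8 k) hs (fun i => by simp [π8]; decide) hhappy
  rw [h1, Tok.D_one] at h
  have := Tok.D_pi k
  omega
end

section
/- For coloured token swapping on a star, every token-vertex assignment gives rise to at least κ nontrivial locked cycles, where κ is the number of nontrivial connected components of the auxiliary multigraph G not containing the edge corresponding to the star's center vertex. Consequently the minimum number of swaps over all token-vertex assignments is exactly (n−1−λ) + κ. -/
/-- Edges of the auxiliary multigraph: for each star vertex `u` there is a directed
edge from its colour `vc u` to the colour `tc u` of its initial token. -/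
def edgeRel {C : Type*} {n : ℕ} (vc tc : Fin (n + 1) → C) : C → C → Prop :=
  fun c d => ∃ u : Fin (n + 1), vc u = c ∧ tc u = d

/-- `κ`: the number of nontrivial connected components of the auxiliary multigraph
(components containing an edge between distinct colours) other than the component
containing the edge of the center vertex `0`. -/
noncomputable def kappa {C : Type*} (n : ℕ) (vc tc : Fin (n + 1) → C) : ℕ :=
  Nat.card {Q : Quotient (Relation.EqvGen.setoid (edgeRel vc tc)) //
    Q ≠ Quotient.mk (Relation.EqvGen.setoid (edgeRel vc tc)) (vc 0) ∧
    ∃ u : Fin (n + 1), vc u ≠ tc u ∧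
      Quotient.mk (Relation.EqvGen.setoid (edgeRel vc tc)) (vc u) = Q}

namespace StarAux

open Equiv.Perm

theorem sameCycle_nat {α : Type*} [Finite α] {f : Equiv.Perm α} {x y : α}
    (h : f.SameCycle x y) : ∃ k : ℕ, (f ^ k) x = y := by
  obtain ⟨i, -, hi⟩ := h.exists_pow_eq'
  exact ⟨i, hi⟩

/-- Something invariant under one step is invariant along cycles. -/
theorem sameCycle_ind {α : Type*} [Finite α] {f : Equiv.Perm α} (P : α → Prop)
    (hP : ∀ x, P x → P (f x)) {x y : α} (h : f.SameCycle x y) (hx : P x) : P y := by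
  obtain ⟨k, rfl⟩ := sameCycle_nat h
  have key : ∀ k : ℕ, P ((f ^ k) x) := by
    intro k
    induction k with
    | zero => simpa using hx
    | succ k ih =>
      rw [pow_succ', Equiv.Perm.mul_apply]
      exact hP _ ih
  exact key k

theorem merge_uv {α : Type*} [Finite α] [DecidableEq α] (f : Equiv.Perm α) {u v : α}
    (h : ¬ f.SameCycle u v) : (Equiv.swap u v * f).SameCycle u v := by
  have key : ∀ y, f.SameCycle u y → (Equiv.swap u v * f).SameCycle u y := by
    intro y hy
    have := sameCycle_ind (f := f)
      (fun y => f.SameCycle u y ∧ (Equiv.swap u v * f).SameCycle u y) ?_ hy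
      ⟨SameCycle.refl _ _, SameCycle.refl _ _⟩
    · exact this.2
    · rintro x ⟨h1, h2⟩
      have h1' : f.SameCycle u (f x) := sameCycle_apply_right.2 h1
      refine ⟨h1', ?_⟩
      by_cases hu : f x = u
      · rw [hu]
      · have hv : f x ≠ v := by
          intro hv
          exact h (hv ▸ h1')
        have h3 : (Equiv.swap u v * f).SameCycle u ((Equiv.swap u v * f) x) :=
          sameCycle_apply_right.2 h2
        rwa [Equiv.Perm.mul_apply, Equiv.swap_apply_of_ne_of_ne hu hv] at h3
  have h1 : f.SameCycle u (f.symm u) := by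
    rw [← sameCycle_apply_right, Equiv.apply_symm_apply]
  have h2 := sameCycle_apply_right.2 (key _ h1)
  simpa using h2

theorem merge_all {α : Type*} [Finite α] [DecidableEq α] (f : Equiv.Perm α) {u v : α}
    (h : ¬ f.SameCycle u v) {x y : α} (hxy : f.SameCycle x y) :
    (Equiv.swap u v * f).SameCycle x y := by
  have huv := merge_uv f h
  refine sameCycle_ind (f := f) (fun y => (Equiv.swap u v * f).SameCycle x y) ?_ hxy
    (SameCycle.refl _ _)
  intro z hz
  have h3 : (Equiv.swap u v * f).SameCycle x ((Equiv.swap u v * f) z) :=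
    sameCycle_apply_right.2 hz
  rw [Equiv.Perm.mul_apply] at h3
  by_cases hu : f z = u
  · rw [hu, Equiv.swap_apply_left] at h3
    rw [hu]
    exact h3.trans huv.symm
  · by_cases hv : f z = v
    · rw [hv, Equiv.swap_apply_right] at h3
      rw [hv]
      exact h3.trans huv
    · rwa [Equiv.swap_apply_of_ne_of_ne hu hv] at h3

variable {C : Type*} {n : ℕ}

theorem comp_eq (vc tc : Fin (n + 1) → C) (T : Equiv.Perm (Fin (n + 1)))
    (hT : ∀ u, vc (T u) = tc u) {u v : Fin (n + 1)} (h : T.SameCycle u v) :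
    Quotient.mk (Relation.EqvGen.setoid (edgeRel vc tc)) (vc u) =
      Quotient.mk (Relation.EqvGen.setoid (edgeRel vc tc)) (vc v) := by
  refine sameCycle_ind (f := T) (fun v => Quotient.mk (Relation.EqvGen.setoid (edgeRel vc tc))
    (vc u) = Quotient.mk (Relation.EqvGen.setoid (edgeRel vc tc)) (vc v)) ?_ h rfl
  intro x hx
  rw [hx, hT]
  exact Quotient.sound (Relation.EqvGen.rel _ _ ⟨x, rfl, rfl⟩)

theorem lower (vc tc : Fin (n + 1) → C) (T : Equiv.Perm (Fin (n + 1)))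
    (hT : ∀ u, vc (T u) = tc u) :
    kappa n vc tc ≤ (T.cycleFactorsFinset.filter fun c => c 0 = 0).card := by
  classical
  unfold kappa
  rw [← Nat.card_eq_finsetCard]
  have hne : ∀ u : Fin (n + 1), vc u ≠ tc u → T u ≠ u := by
    intro u hu h
    exact hu (by rw [← hT u, h])
  refine Nat.card_le_card_of_injective (fun Q => ⟨T.cycleOf Q.2.2.choose, ?_⟩) ?_
  · have hs := Q.2.2.choose_spec
    rw [Finset.mem_filter]
    refine ⟨cycleOf_mem_cycleFactorsFinset_iff.2 (mem_support.2 (hne _ hs.1)), ?_⟩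
    apply cycleOf_apply_of_not_sameCycle
    intro h
    exact Q.2.1 (hs.2.symm.trans (comp_eq vc tc T hT h))
  · intro Q R hQR
    have hQ := Q.2.2.choose_spec
    have hR := R.2.2.choose_spec
    have h : T.cycleOf Q.2.2.choose = T.cycleOf R.2.2.choose := congrArg Subtype.val hQR
    have h2 : T.SameCycle R.2.2.choose Q.2.2.choose := by
      have : Q.2.2.choose ∈ (T.cycleOf Q.2.2.choose).support :=
        mem_support_cycleOf_iff.2 ⟨SameCycle.refl _ _, mem_support.2 (hne _ hQ.1)⟩
      rw [h] at this
      exact (mem_support_cycleOf_iff.1 this).1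
    exact Subtype.ext (hQ.2.symm.trans ((comp_eq vc tc T hT h2).symm.trans hR.2))

/-- An assignment is good if it is valid and fixes all leaf-loops. -/
def Good (vc tc : Fin (n + 1) → C) (T : Equiv.Perm (Fin (n + 1))) : Prop :=
  (∀ u, vc (T u) = tc u) ∧ ∀ u, u ≠ 0 → tc u = vc u → T u = u

theorem exists_good [DecidableEq C] (vc tc : Fin (n + 1) → C)
    (hcount : ∀ c : C,
      (Finset.univ.filter fun u : Fin (n + 1) => tc u = c).card =
        (Finset.univ.filter fun u : Fin (n + 1) => vc u = c).card) :
    ∃ T, Good vc tc T := by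
  classical
  let p : Fin (n + 1) → Prop := fun u => ¬ (u ≠ 0 ∧ tc u = vc u)
  have hc : ∀ c : C, Nonempty ({a : Subtype p // tc a = c} ≃ {a : Subtype p // vc a = c}) := by
    intro c
    have e : ∀ f : Fin (n + 1) → C, Fintype.card {a : Subtype p // f a = c} =
        ((Finset.univ.filter fun u => f u = c).filter p).card := by
      intro f
      rw [Fintype.card_congr (Equiv.subtypeSubtypeEquivSubtypeInter p (fun u => f u = c)),
        Fintype.card_subtype]
      congr 1
      ext u
      simp [and_comm]
    refine ⟨Fintype.equivOfCardEq ?_⟩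
    rw [e, e]
    have h1 := Finset.card_filter_add_card_filter_not
      (s := Finset.univ.filter fun u => tc u = c) p
    have h2 := Finset.card_filter_add_card_filter_not
      (s := Finset.univ.filter fun u => vc u = c) p
    have h3 : (Finset.univ.filter fun u => tc u = c).filter (fun u => ¬ p u) =
        (Finset.univ.filter fun u => vc u = c).filter (fun u => ¬ p u) := by
      ext u
      simp only [p, Finset.mem_filter, Finset.mem_univ, true_and, not_not]
      constructor
      · rintro ⟨h, h0, h'⟩
        exact ⟨h' ▸ h, h0, h'⟩
      · rintro ⟨h, h0, h'⟩
        exact ⟨h' ▸ h, h0, h'⟩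
    rw [h3] at h1
    have := hcount c
    omega
  let e : Equiv.Perm (Subtype p) := Equiv.ofFiberEquiv (f := fun a : Subtype p => tc a)
    (g := fun a : Subtype p => vc a) (fun c => (hc c).some)
  refine ⟨ofSubtype e, ?_, ?_⟩
  · intro u
    by_cases hu : p u
    · rw [ofSubtype_apply_of_mem e hu]
      exact Equiv.ofFiberEquiv_map (f := fun a : Subtype p => tc a)
        (g := fun a : Subtype p => vc a) (fun c => (hc c).some) ⟨u, hu⟩
    · rw [ofSubtype_apply_of_not_mem e hu]
      exact (not_not.1 hu).2.symm
  · intro u h0 h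
    exact ofSubtype_apply_of_not_mem e (not_not.2 ⟨h0, h⟩)

theorem exists_best [DecidableEq C] (vc tc : Fin (n + 1) → C)
    (hcount : ∀ c : C,
      (Finset.univ.filter fun u : Fin (n + 1) => tc u = c).card =
        (Finset.univ.filter fun u : Fin (n + 1) => vc u = c).card) :
    ∃ T, Good vc tc T ∧ ∀ u v, (u = 0 ∨ tc u ≠ vc u) → (v = 0 ∨ tc v ≠ vc v) →
      vc u = vc v → T.SameCycle u v := by
  classical
  let S : Finset (Equiv.Perm (Fin (n + 1))) := Finset.univ.filter (Good vc tc)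
  let m : Equiv.Perm (Fin (n + 1)) → ℕ := fun T =>
    (Finset.univ.filter fun q : Fin (n + 1) × Fin (n + 1) => T.SameCycle q.1 q.2).card
  have hS : S.Nonempty := by
    obtain ⟨T, hT⟩ := exists_good vc tc hcount
    exact ⟨T, by simp [S, hT]⟩
  obtain ⟨T, hTS, hmax⟩ := Finset.exists_max_image S m hS
  have hT : Good vc tc T := by simpa [S] using hTS
  refine ⟨T, hT, ?_⟩
  intro u v hu hv huv
  by_contra hn
  have hgood : Good vc tc (Equiv.swap u v * T) := by
    refine ⟨?_, ?_⟩
    · intro w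
      rw [Equiv.Perm.mul_apply, ← hT.1 w]
      by_cases h1 : T w = u
      · rw [h1, Equiv.swap_apply_left, huv]
      · by_cases h2 : T w = v
        · rw [h2, Equiv.swap_apply_right, huv]
        · rw [Equiv.swap_apply_of_ne_of_ne h1 h2]
    · intro w h0 hw
      rw [Equiv.Perm.mul_apply, hT.2 w h0 hw]
      apply Equiv.swap_apply_of_ne_of_ne
      · rintro rfl
        tauto
      · rintro rfl
        tauto
  have hle := hmax (Equiv.swap u v * T) (by simp [S, hgood])
  have hlt : m T < m (Equiv.swap u v * T) := by
    apply Finset.card_lt_card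
    rw [Finset.ssubset_iff_of_subset]
    · refine ⟨(u, v), ?_, ?_⟩
      · simpa using merge_uv T hn
      · simpa using hn
    · intro q hq
      simp only [Finset.mem_filter, Finset.mem_univ, true_and] at hq ⊢
      exact merge_all T hn hq
  omega

theorem best_conn (vc tc : Fin (n + 1) → C) (T : Equiv.Perm (Fin (n + 1)))
    (hT : Good vc tc T)
    (hb : ∀ u v, (u = 0 ∨ tc u ≠ vc u) → (v = 0 ∨ tc v ≠ vc v) →
      vc u = vc v → T.SameCycle u v) {c d : C} (h : Relation.EqvGen (edgeRel vc tc) c d) :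
    c = d ∨ ∃ u v, (u = 0 ∨ tc u ≠ vc u) ∧ (v = 0 ∨ tc v ≠ vc v) ∧ vc u = c ∧ vc v = d ∧
      T.SameCycle u v := by
  induction h with
  | rel c d h =>
    obtain ⟨w, rfl, rfl⟩ := h
    by_cases hw : tc w = vc w
    · exact Or.inl hw.symm
    · refine Or.inr ⟨w, T w, Or.inr hw, ?_, rfl, hT.1 w, sameCycle_apply_right.2
        (SameCycle.refl _ _)⟩
      by_contra hn
      push Not at hn
      have := T.injective (hT.2 (T w) hn.1 hn.2)
      rw [this] at hn
      exact hw hn.2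
  | refl c => exact Or.inl rfl
  | symm c d _ ih =>
    rcases ih with rfl | ⟨u, v, hu, hv, h1, h2, h3⟩
    · exact Or.inl rfl
    · exact Or.inr ⟨v, u, hv, hu, h2, h1, h3.symm⟩
  | trans c d e _ _ ih1 ih2 =>
    rcases ih1 with rfl | ⟨u, v, hu, hv, h1, h2, h3⟩
    · exact ih2
    · rcases ih2 with rfl | ⟨u', v', hu', hv', h1', h2', h3'⟩
      · exact Or.inr ⟨u, v, hu, hv, h1, h2, h3⟩
      · exact Or.inr ⟨u, v', hu, hv', h1, h2',
          h3.trans ((hb v u' hv hu' (h2.trans h1'.symm)).trans h3')⟩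

theorem best_same (vc tc : Fin (n + 1) → C) (T : Equiv.Perm (Fin (n + 1)))
    (hT : Good vc tc T)
    (hb : ∀ u v, (u = 0 ∨ tc u ≠ vc u) → (v = 0 ∨ tc v ≠ vc v) →
      vc u = vc v → T.SameCycle u v) {u v : Fin (n + 1)}
    (hu : u = 0 ∨ tc u ≠ vc u) (hv : v = 0 ∨ tc v ≠ vc v)
    (h : Quotient.mk (Relation.EqvGen.setoid (edgeRel vc tc)) (vc u) =
      Quotient.mk (Relation.EqvGen.setoid (edgeRel vc tc)) (vc v)) : T.SameCycle u v := by
  have h' : Relation.EqvGen (edgeRel vc tc) (vc u) (vc v) := Quotient.exact h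
  rcases best_conn vc tc T hT hb h' with h1 | ⟨u', v', hu', hv', h1, h2, h3⟩
  · exact hb u v hu hv h1
  · exact (hb u u' hu hu' h1.symm).trans (h3.trans (hb v' v hv' hv h2))

theorem upper (vc tc : Fin (n + 1) → C) (T : Equiv.Perm (Fin (n + 1)))
    (hT : Good vc tc T)
    (hb : ∀ u v, (u = 0 ∨ tc u ≠ vc u) → (v = 0 ∨ tc v ≠ vc v) →
      vc u = vc v → T.SameCycle u v) :
    (T.cycleFactorsFinset.filter fun c => c 0 = 0).card ≤ kappa n vc tc := by
  unfold kappa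
  rw [← Nat.card_eq_finsetCard]
  have hfin : Finite {Q : Quotient (Relation.EqvGen.setoid (edgeRel vc tc)) //
      Q ≠ Quotient.mk (Relation.EqvGen.setoid (edgeRel vc tc)) (vc 0) ∧
      ∃ u : Fin (n + 1), vc u ≠ tc u ∧
        Quotient.mk (Relation.EqvGen.setoid (edgeRel vc tc)) (vc u) = Q} := by
    refine Finite.of_injective (fun Q => Q.2.2.choose) ?_
    intro Q R h
    have hQ := Q.2.2.choose_spec
    have hR := R.2.2.choose_spec
    have h' : Q.2.2.choose = R.2.2.choose := h
    have h2 := hQ.2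
    rw [h'] at h2
    exact Subtype.ext (h2.symm.trans hR.2)
  have hex : ∀ c : {c // c ∈ T.cycleFactorsFinset.filter fun c => c 0 = 0},
      ∃ u, u ≠ 0 ∧ vc u ≠ tc u ∧ ¬ T.SameCycle u 0 ∧ c.1 = T.cycleOf u := by
    rintro ⟨c, hc⟩
    rw [Finset.mem_filter] at hc
    obtain ⟨u, hu⟩ := (mem_cycleFactorsFinset_iff.1 hc.1).1.nonempty_support
    have hcu := cycle_is_cycleOf hu hc.1
    have hTu : T u ≠ u := by
      rw [hcu, mem_support_cycleOf_iff] at hu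
      exact mem_support.1 hu.2
    have hu0 : u ≠ 0 := by
      rintro rfl
      exact mem_support.1 hu hc.2
    refine ⟨u, hu0, fun h => hTu (hT.2 u hu0 h.symm), ?_, hcu⟩
    intro h
    have h1 : (0 : Fin (n + 1)) ∈ c.support := by
      rw [hcu, mem_support_cycleOf_iff]
      exact ⟨h, mem_support.2 hTu⟩
    exact mem_support.1 h1 hc.2
  choose g hg0 hg1 hg2 hg3 using hex
  refine Nat.card_le_card_of_injective
    (fun c => ⟨Quotient.mk (Relation.EqvGen.setoid (edgeRel vc tc)) (vc (g c)), ?_, g c,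
      hg1 c, rfl⟩) ?_
  · intro h
    exact hg2 c (best_same vc tc T hT hb (Or.inr (hg1 c).symm) (Or.inl rfl) h)
  · intro c d hcd
    have h := congrArg Subtype.val hcd
    have hs := best_same vc tc T hT hb (Or.inr (hg1 c).symm) (Or.inr (hg1 d).symm) h
    exact Subtype.ext (by rw [hg3 c, hg3 d, hs.cycleOf_eq])

theorem count_leaves (p : Fin (n + 1) → Prop) [DecidablePred p] :
    (Finset.univ.filter fun v : Fin (n + 1) => v ≠ 0 ∧ p v).card +
      (Finset.univ.filter fun v : Fin (n + 1) => v ≠ 0 ∧ ¬ p v).card = n := by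
  have h := Finset.card_filter_add_card_filter_not
    (s := Finset.univ.filter fun v : Fin (n + 1) => v ≠ 0) p
  rw [Finset.filter_filter, Finset.filter_filter] at h
  rw [h, Finset.filter_ne']
  simp

end StarAux

/-- For coloured token swapping on a star (with matching colour counts), every
token-vertex assignment `T` (a permutation with `vc (T u) = tc u`) has at least `κ`
nontrivial locked cycles; consequently, by the star formula `n_U + ℓ`, the minimum
number of swaps over all token-vertex assignments is exactly `(n − λ) + κ`
(star on `n + 1` vertices, so `n` leaves; `λ` = number of leaf-loops). -/
theorem stmt16 {C : Type*} [DecidableEq C] (n : ℕ) (vc tc : Fin (n + 1) → C)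
    (hcount : ∀ c : C,
      (Finset.univ.filter fun u : Fin (n + 1) => tc u = c).card =
        (Finset.univ.filter fun u : Fin (n + 1) => vc u = c).card) :
    (∀ T : Equiv.Perm (Fin (n + 1)), (∀ u, vc (T u) = tc u) →
      kappa n vc tc ≤ (T.cycleFactorsFinset.filter fun c => c 0 = 0).card) ∧
    IsLeast {m : ℕ | ∃ T : Equiv.Perm (Fin (n + 1)), (∀ u, vc (T u) = tc u) ∧
        m = (Finset.univ.filter fun v : Fin (n + 1) => v ≠ 0 ∧ T v ≠ v).card +
          (T.cycleFactorsFinset.filter fun c => c 0 = 0).card}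
      ((n - (Finset.univ.filter fun v : Fin (n + 1) => v ≠ 0 ∧ tc v = vc v).card) +
        kappa n vc tc) := by
  refine ⟨fun T hT => StarAux.lower vc tc T hT, ?_, ?_⟩
  · obtain ⟨T, hT, hb⟩ := StarAux.exists_best vc tc hcount
    refine ⟨T, hT.1, ?_⟩
    have h1 := StarAux.lower vc tc T hT.1
    have h2 := StarAux.upper vc tc T hT hb
    have h3 := StarAux.count_leaves (n := n) (fun v => tc v = vc v)
    have h4 : (Finset.univ.filter fun v : Fin (n + 1) => v ≠ 0 ∧ T v ≠ v) =
        (Finset.univ.filter fun v : Fin (n + 1) => v ≠ 0 ∧ ¬ tc v = vc v) := by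
      ext v
      simp only [Finset.mem_filter, Finset.mem_univ, true_and]
      refine and_congr_right fun h0 => not_congr ⟨fun h => ?_, fun h => hT.2 v h0 h⟩
      rw [← hT.1 v, h]
    rw [h4]
    omega
  · rintro m ⟨T, hT, rfl⟩
    have h1 := StarAux.lower vc tc T hT
    have h3 := StarAux.count_leaves (n := n) (fun v => T v = v)
    have h4 : (Finset.univ.filter fun v : Fin (n + 1) => v ≠ 0 ∧ T v = v).card ≤
        (Finset.univ.filter fun v : Fin (n + 1) => v ≠ 0 ∧ tc v = vc v).card := by
      apply Finset.card_le_card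
      intro v
      simp only [Finset.mem_filter, Finset.mem_univ, true_and]
      rintro ⟨h0, h⟩
      exact ⟨h0, by rw [← hT v, h]⟩
    change n - _ + _ ≤ _
    have h5 : (Finset.univ.filter fun v : Fin (n + 1) => v ≠ 0 ∧ T v ≠ v).card =
      (Finset.univ.filter fun v : Fin (n + 1) => v ≠ 0 ∧ ¬ T v = v).card := rfl
    omega
end
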